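/- arXiv:math/0308238 — 2 statements merged into one kernel-verified Lean document; each statement's English description precedes it below -/
import Mathlib

section
/- There exists a constant C > 0 (depending only on p and d) such that for every n ∈ ℕ and every x ∈ C₀([0,1], G(ℝ^d)) with 0 < ‖x‖_{φ_p} < ∞: d_∞( x, Υ_n(x) ) ≤ C ‖x‖_{φ_p} √( φ_p(2^{−n}) ). -/
/-!
Write `φ = φ_p`, `h = 2⁻ⁿ`, `N = ‖x‖_φ` and `y = Υ_n(x)`.

*The gauge.* `convEnv p` is the pointwise infimum of the convex majorants of `ζ^p`. As `ζ` is
concave with a nonnegative tangent line `L` at each `u ∈ (0, 1]`, the function `L ^ p` is a convex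
majorant of `ζ^p` touching it at `u`; hence `φ = ζ` on `(0, 1]` (`phiP_eq`). In particular `φ` is
positive and increasing there, so `‖x_{s,t}‖ ≤ N φ(t - s)` (`gnorm_inc_le`).

*Local errors.* With `y_u = x_u ⊗ ε_u`, the element `ε_u` is the product of the inverse of an
increment of `x` of length at most `h` and of a dilated increment of length `h`, so that
`‖ε_u‖ ≤ 2 N φ(h)` (`exists_upsilon_eq_mul`).

*Passing to increments.* With `g = x_{s,t}` one has
`x_{s,t}⁻¹ ⊗ y_{s,t} = g⁻¹ ε_s⁻¹ g ε_t = [g⁻¹, ε_s⁻¹] ε_s⁻¹ ε_t`. The two trailing factors cost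
`4 N φ(h)`. A commutator of `a` and `b` lies in the second level and has norm at most
`4 √(‖a‖ ‖b‖)` (`G.gnorm_commutator_le`), which here is `O(N √(φ(1) φ(h)))`; this is where the
square root comes from.

The triangle inequality for `gnorm`, an infimum over representations, requires every group element
to have a representation as a product of exponentials (`G.lengths_nonempty`).
-/

noncomputable section

open scoped BigOperators
open MeasureTheory Filter Matrix

namespace PaperFV

/-- `Vec d` is `ℝ^d`. -/
abbrev Vec (d : ℕ) := Fin d → ℝ

/-- `Mat d` is the space of real `d × d` matrices. -/
abbrev Mat (d : ℕ) := Matrix (Fin d) (Fin d) ℝ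

/-- The Euclidean norm on `ℝ^d`. -/
def enorm {d : ℕ} (x : Vec d) : ℝ := Real.sqrt (∑ i, (x i) ^ 2)

/-- The defining condition of the step-2 free nilpotent group over `ℝ^d`:
the symmetric part of the second component equals `½ g¹ (g¹)ᵀ`. -/
def IsG {d : ℕ} (g : Vec d × Mat d) : Prop :=
  g.2 + g.2ᵀ = Matrix.vecMulVec g.1 g.1

/-- The step-2 free nilpotent group `G(ℝ^d)`. -/
def G (d : ℕ) : Type := { g : Vec d × Mat d // IsG g }

namespace G

variable {d : ℕ}

/-- Group multiplication `g ⊗ h = (g¹ + h¹, g² + g¹ (h¹)ᵀ + h²)`. -/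
def mul (g h : G d) : G d :=
  ⟨(g.1.1 + h.1.1, g.1.2 + Matrix.vecMulVec g.1.1 h.1.1 + h.1.2), by
    have hg := g.2
    have hh := h.2
    simp only [IsG] at *
    ext i j
    have hg' := congrFun (congrFun hg i) j
    have hh' := congrFun (congrFun hh i) j
    simp only [Matrix.add_apply, Matrix.transpose_apply, Matrix.vecMulVec_apply,
      Pi.add_apply] at *
    nlinarith [hg', hh']⟩

/-- The identity element `e = (0, 0)`. -/
def one : G d :=
  ⟨(0, 0), by
    ext i j
    simp [IsG, Matrix.vecMulVec_apply]⟩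

/-- The inverse `g⁻¹ = (−g¹, g¹ (g¹)ᵀ − g²)`. -/
def inv (g : G d) : G d :=
  ⟨(-g.1.1, Matrix.vecMulVec g.1.1 g.1.1 - g.1.2), by
    have hg := g.2
    simp only [IsG] at *
    ext i j
    have hg' := congrFun (congrFun hg i) j
    simp only [Matrix.add_apply, Matrix.sub_apply, Matrix.transpose_apply,
      Matrix.vecMulVec_apply, Pi.neg_apply] at *
    nlinarith [hg']⟩

/-- `exp x = (x, ½ x xᵀ)`. -/
def gexp (x : Vec d) : G d :=
  ⟨(x, (2⁻¹ : ℝ) • Matrix.vecMulVec x x), by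
    ext i j
    simp only [IsG, Matrix.add_apply, Matrix.transpose_apply, Matrix.smul_apply,
      Matrix.vecMulVec_apply, smul_eq_mul]
    ring⟩

/-- The dilation `δ_t (g¹, g²) = (t g¹, t² g²)`. -/
def dil (t : ℝ) (g : G d) : G d :=
  ⟨(t • g.1.1, (t ^ 2) • g.1.2), by
    have hg := g.2
    simp only [IsG] at *
    ext i j
    have hg' := congrFun (congrFun hg i) j
    simp only [Matrix.add_apply, Matrix.transpose_apply, Matrix.smul_apply,
      Matrix.vecMulVec_apply, Pi.smul_apply, smul_eq_mul] at *
    nlinarith [hg']⟩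

/-- Product of a list of group elements. -/
def prodL : List (G d) → G d
  | [] => one
  | g :: l => mul g (prodL l)

/-- The homogeneous (Carnot–Carathéodory) norm:
`‖g‖ = inf { Σ |xᵢ| : exp(x₁) ⊗ ⋯ ⊗ exp(xₙ) = g }`. -/
def gnorm (g : G d) : ℝ :=
  sInf { r | ∃ l : List (Vec d), prodL (l.map gexp) = g ∧ r = (l.map enorm).sum }

/-- The left-invariant distance `d(g, h) = ‖h⁻¹ ⊗ g‖`. -/
def gdist (g h : G d) : ℝ := gnorm (mul (inv h) g)

end G

open G

/-- A continuous `G(ℝ^d)`-valued path on `[0,1]` started at the identity. -/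
def IsPath {d : ℕ} (x : ℝ → G d) : Prop :=
  ContinuousOn (fun t => (x t).1) (Set.Icc 0 1) ∧ x 0 = one

/-- The increment `x_{s,t} = x_s⁻¹ ⊗ x_t`. -/
def inc {d : ℕ} (x : ℝ → G d) (s t : ℝ) : G d := mul (inv (x s)) (x t)

/-- The set of values whose supremum is `d_∞(x,y)`. -/
def dInfSet {d : ℕ} (x y : ℝ → G d) : Set ℝ :=
  { r | ∃ s t : ℝ, 0 ≤ s ∧ s < t ∧ t ≤ 1 ∧
      r = gnorm (mul (inv (inc x s t)) (inc y s t)) }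

/-- `d_∞(x,y) = sup_{0 ≤ s < t ≤ 1} ‖x_{s,t}⁻¹ ⊗ y_{s,t}‖`. -/
def dInf {d : ℕ} (x y : ℝ → G d) : ℝ := sSup (dInfSet x y)

/-- The set of values whose supremum is `d_φ(x,y)`. -/
def dPhiSet {d : ℕ} (φ : ℝ → ℝ) (x y : ℝ → G d) : Set ℝ :=
  { r | ∃ s t : ℝ, 0 ≤ s ∧ s < t ∧ t ≤ 1 ∧
      r = gnorm (mul (inv (inc x s t)) (inc y s t)) / φ (t - s) }

/-- `d_φ(x,y) = sup_{0 ≤ s < t ≤ 1} ‖x_{s,t}⁻¹ ⊗ y_{s,t}‖ / φ(t-s)`. -/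
def dPhi {d : ℕ} (φ : ℝ → ℝ) (x y : ℝ → G d) : ℝ := sSup (dPhiSet φ x y)

/-- The set of values whose supremum is `‖x‖_φ`. -/
def normPhiSet {d : ℕ} (φ : ℝ → ℝ) (x : ℝ → G d) : Set ℝ :=
  { r | ∃ s t : ℝ, 0 ≤ s ∧ s < t ∧ t ≤ 1 ∧ r = gnorm (inc x s t) / φ (t - s) }

/-- `‖x‖_φ = sup_{0 ≤ s < t ≤ 1} ‖x_{s,t}‖ / φ(t-s)`. -/
def normPhi {d : ℕ} (φ : ℝ → ℝ) (x : ℝ → G d) : ℝ := sSup (normPhiSet φ x)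

/-- `‖x‖_∞ = sup_{0 ≤ s < t ≤ 1} ‖x_{s,t}‖`. -/
def normInf {d : ℕ} (x : ℝ → G d) : ℝ :=
  sSup { r | ∃ s t : ℝ, 0 ≤ s ∧ s < t ∧ t ≤ 1 ∧ r = gnorm (inc x s t) }

/-- The class `Ξ_p` of functions `φ : [0,1] → [0,∞)` with `φ(0) = 0` such that
`φ^p` is strictly increasing and convex. -/
def Xi (p : ℝ) (φ : ℝ → ℝ) : Prop :=
  φ 0 = 0 ∧ (∀ x ∈ Set.Icc (0:ℝ) 1, 0 ≤ φ x) ∧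
    StrictMonoOn (fun x => φ x ^ p) (Set.Icc (0:ℝ) 1) ∧
    ConvexOn ℝ (Set.Icc (0:ℝ) 1) (fun x => φ x ^ p)

/-- `ζ(x) = (1/(2√2)) ∫₀^x √( log(1 + 1/u²) / u ) du`. -/
def zeta (x : ℝ) : ℝ :=
  (1 / (2 * Real.sqrt 2)) * ∫ u in (0:ℝ)..x, Real.sqrt (Real.log (1 + 1 / u ^ 2) / u)

/-- The smallest convex function on `[0,1]` dominating `ζ^p`. -/
def convEnv (p : ℝ) (x : ℝ) : ℝ :=
  sInf { y | ∃ g : ℝ → ℝ, ConvexOn ℝ (Set.Icc (0:ℝ) 1) g ∧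
    (∀ z ∈ Set.Icc (0:ℝ) 1, zeta z ^ p ≤ g z) ∧ y = g x }

/-- `φ_p`, the `p`-th root of the smallest convex function on `[0,1]` dominating `ζ^p`. -/
def phiP (p : ℝ) (x : ℝ) : ℝ := convEnv p x ^ (1 / p)

/-- The piecewise "linear" (with dilated increments) dyadic approximation `Υ_n(x)`:
`Υ_n(x)_{k/2ⁿ + t} = x_{k/2ⁿ} ⊗ δ_{2ⁿ t}(x_{k/2ⁿ, (k+1)/2ⁿ})` for `t ∈ [0, 2⁻ⁿ]`. -/
def upsilon {d : ℕ} (n : ℕ) (x : ℝ → G d) : ℝ → G d := fun u =>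
  let k : ℤ := ⌊(2 : ℝ) ^ n * u⌋
  mul (x ((k : ℝ) / 2 ^ n))
    (dil ((2 : ℝ) ^ n * u - (k : ℝ)) (inc x ((k : ℝ) / 2 ^ n) (((k : ℝ) + 1) / 2 ^ n)))


/-! ### The group structure and the homogeneous norm -/

namespace G

variable {d : ℕ}

theorem ext' {g h : G d} (h₁ : g.1.1 = h.1.1) (h₂ : g.1.2 = h.1.2) : g = h :=
  Subtype.ext (Prod.ext h₁ h₂)

instance : Group (G d) where
  mul := mul
  one := one
  inv := inv
  mul_assoc a b c := by
    apply ext'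
    · exact add_assoc _ _ _
    · change (a.1.2 + vecMulVec a.1.1 b.1.1 + b.1.2) + vecMulVec (a.1.1 + b.1.1) c.1.1 + c.1.2
        = a.1.2 + vecMulVec a.1.1 (b.1.1 + c.1.1) + (b.1.2 + vecMulVec b.1.1 c.1.1 + c.1.2)
      rw [add_vecMulVec, vecMulVec_add]
      abel
  one_mul a := by
    apply ext'
    · exact zero_add _
    · change 0 + vecMulVec 0 a.1.1 + a.1.2 = a.1.2
      simp
  mul_one a := by
    apply ext'
    · exact add_zero _
    · change a.1.2 + vecMulVec a.1.1 0 + 0 = a.1.2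
      simp
  inv_mul_cancel a := by
    apply ext'
    · exact neg_add_cancel _
    · change (vecMulVec a.1.1 a.1.1 - a.1.2) + vecMulVec (-a.1.1) a.1.1 + a.1.2 = 0
      rw [neg_vecMulVec]
      abel

theorem mul_eq (g h : G d) : mul g h = g * h := rfl
theorem inv_eq (g : G d) : inv g = g⁻¹ := rfl
theorem one_eq : (one : G d) = 1 := rfl

theorem mul_fst (g h : G d) : (g * h).1.1 = g.1.1 + h.1.1 := rfl
theorem mul_snd (g h : G d) :
    (g * h).1.2 = g.1.2 + vecMulVec g.1.1 h.1.1 + h.1.2 := rfl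
theorem inv_fst (g : G d) : (g⁻¹).1.1 = -g.1.1 := rfl
theorem inv_snd (g : G d) : (g⁻¹).1.2 = vecMulVec g.1.1 g.1.1 - g.1.2 := rfl
theorem one_fst : (1 : G d).1.1 = 0 := rfl
theorem one_snd : (1 : G d).1.2 = 0 := rfl
theorem gexp_fst (x : Vec d) : (gexp x).1.1 = x := rfl
theorem gexp_snd (x : Vec d) : (gexp x).1.2 = (2⁻¹ : ℝ) • vecMulVec x x := rfl

theorem prodL_append (l m : List (G d)) : prodL (l ++ m) = prodL l * prodL m := by
  induction l with
  | nil => exact (one_mul _).symm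
  | cons g l ih =>
    change g * prodL (l ++ m) = g * prodL l * prodL m
    rw [ih, mul_assoc]

theorem gexp_neg (x : Vec d) : gexp (-x) = (gexp x)⁻¹ := by
  apply ext'
  · rfl
  · rw [gexp_snd, inv_snd, gexp_fst, gexp_snd, neg_vecMulVec, vecMulVec_neg, neg_neg]
    module

theorem prodL_inv (l : List (Vec d)) :
    prodL (((l.map Neg.neg).reverse).map gexp) = (prodL (l.map gexp))⁻¹ := by
  induction l with
  | nil => exact inv_one.symm
  | cons x l ih =>
    simp only [List.map_cons, List.reverse_cons, List.map_append, List.map_nil]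
    rw [prodL_append, ih, gexp_neg]
    change _ * ((gexp x)⁻¹ * 1) = (gexp x * _)⁻¹
    rw [mul_one, _root_.mul_inv_rev]

theorem dil_mul (t : ℝ) (g h : G d) : dil t (g * h) = dil t g * dil t h := by
  apply ext'
  · exact smul_add _ _ _
  · change t ^ 2 • (g.1.2 + vecMulVec g.1.1 h.1.1 + h.1.2)
      = t ^ 2 • g.1.2 + vecMulVec (t • g.1.1) (t • h.1.1) + t ^ 2 • h.1.2
    rw [smul_vecMulVec, vecMulVec_smul, smul_smul, ← pow_two, smul_add, smul_add]

theorem dil_zero (g : G d) : dil 0 g = 1 := by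
  apply ext'
  · exact zero_smul _ _
  · change (0 : ℝ) ^ 2 • g.1.2 = 0
    simp

theorem dil_gexp (t : ℝ) (x : Vec d) : dil t (gexp x) = gexp (t • x) := by
  apply ext'
  · rfl
  · change t ^ 2 • ((2⁻¹ : ℝ) • vecMulVec x x) = (2⁻¹ : ℝ) • vecMulVec (t • x) (t • x)
    rw [smul_vecMulVec, vecMulVec_smul, smul_smul, smul_smul, smul_smul]
    congr 1
    ring

theorem prodL_dil (t : ℝ) (l : List (Vec d)) :
    prodL ((l.map (t • ·)).map gexp) = dil t (prodL (l.map gexp)) := by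
  induction l with
  | nil =>
    apply ext'
    · exact (smul_zero _).symm
    · exact (smul_zero _).symm
  | cons x l ih =>
    change gexp (t • x) * prodL ((l.map (t • ·)).map gexp) = dil t (gexp x * prodL (l.map gexp))
    rw [ih, dil_mul, dil_gexp]

theorem enorm_eq (x : Vec d) : enorm x = ‖WithLp.toLp 2 x‖ := by
  simp [enorm, EuclideanSpace.norm_eq]

theorem enorm_nonneg (x : Vec d) : 0 ≤ enorm x := Real.sqrt_nonneg _

theorem enorm_zero : enorm (0 : Vec d) = 0 := by simp [enorm]

theorem enorm_add_le (x y : Vec d) : enorm (x + y) ≤ enorm x + enorm y := by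
  rw [enorm_eq, enorm_eq, enorm_eq, WithLp.toLp_add]
  exact norm_add_le _ _

theorem enorm_neg (x : Vec d) : enorm (-x) = enorm x := by simp [enorm]

theorem enorm_smul (t : ℝ) (x : Vec d) : enorm (t • x) = |t| * enorm x := by
  rw [enorm_eq, enorm_eq, WithLp.toLp_smul, norm_smul, Real.norm_eq_abs]

/-- The set of lengths of representations of `g` as a product of exponentials; its infimum
is `gnorm g`. -/
def lengths (g : G d) : Set ℝ :=
  { r | ∃ l : List (Vec d), prodL (l.map gexp) = g ∧ r = (l.map enorm).sum }

theorem gnorm_eq (g : G d) : gnorm g = sInf (lengths g) := rfl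

theorem lengths_nonneg {g : G d} {r : ℝ} (hr : r ∈ lengths g) : 0 ≤ r := by
  obtain ⟨l, -, rfl⟩ := hr
  apply List.sum_nonneg
  intro a ha
  obtain ⟨x, -, rfl⟩ := List.mem_map.1 ha
  exact enorm_nonneg x

theorem gnorm_nonneg (g : G d) : 0 ≤ gnorm g :=
  Real.sInf_nonneg fun _ hr => lengths_nonneg hr

theorem gnorm_le_of_mem {g : G d} {r : ℝ} (hr : r ∈ lengths g) : gnorm g ≤ r :=
  csInf_le ⟨0, fun _ h => lengths_nonneg h⟩ hr

theorem mem_lengths_mul {g h : G d} {r s : ℝ} (hr : r ∈ lengths g) (hs : s ∈ lengths h) :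
    r + s ∈ lengths (g * h) := by
  obtain ⟨l, rfl, rfl⟩ := hr
  obtain ⟨m, rfl, rfl⟩ := hs
  exact ⟨l ++ m, by rw [List.map_append, prodL_append], by simp⟩

theorem mem_lengths_inv {g : G d} {r : ℝ} (hr : r ∈ lengths g) : r ∈ lengths g⁻¹ := by
  obtain ⟨l, rfl, rfl⟩ := hr
  refine ⟨(l.map Neg.neg).reverse, prodL_inv l, ?_⟩
  rw [List.map_reverse, List.sum_reverse, List.map_map]
  congr 2
  funext x
  exact (enorm_neg x).symm

theorem mem_lengths_gexp (x : Vec d) : enorm x ∈ lengths (gexp x) :=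
  ⟨[x], mul_one (gexp x), by simp⟩

theorem zero_mem_lengths_one : (0 : ℝ) ∈ lengths (1 : G d) := ⟨[], rfl, by simp⟩

/-- The central element `(0, a bᵀ - b aᵀ)` is the commutator of `exp a` and `exp b`. -/
theorem mem_lengths_comm {g : G d} (a b : Vec d) (h₁ : g.1.1 = 0)
    (h₂ : g.1.2 = vecMulVec a b - vecMulVec b a) :
    2 * (enorm a + enorm b) ∈ lengths g := by
  have hg : g = gexp a * gexp b * (gexp a)⁻¹ * (gexp b)⁻¹ := by
    apply ext'
    · rw [h₁]
      simp only [mul_fst, inv_fst, gexp_fst]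
      abel
    · rw [h₂]
      simp only [mul_fst, mul_snd, inv_fst, inv_snd, gexp_fst, gexp_snd, add_vecMulVec,
        neg_vecMulVec, vecMulVec_neg]
      module
  rw [hg]
  have := mem_lengths_mul (mem_lengths_mul (mem_lengths_mul (mem_lengths_gexp a)
    (mem_lengths_gexp b)) (mem_lengths_inv (mem_lengths_gexp a)))
    (mem_lengths_inv (mem_lengths_gexp b))
  convert this using 1
  ring

/-- Every element of the group is a finite product of exponentials: split off `exp g¹`; what
remains is `(0, A)` with `A` antisymmetric, and `A` is the sum over `j` of the commutators
`½ (A_j e_jᵀ - e_j A_jᵀ)`, where `A_j` is the `j`-th column. -/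
theorem lengths_nonempty (g : G d) : (lengths g).Nonempty := by
  have key : ∀ A : Mat d, A + Aᵀ = 0 →
      ∃ h : G d, h.1.1 = 0 ∧ h.1.2 = A ∧ (lengths h).Nonempty := by
    intro A hA
    have hsum : A = ∑ j : Fin d, (vecMulVec ((2⁻¹ : ℝ) • A.col j) (Pi.single j 1)
        - vecMulVec (Pi.single j 1) ((2⁻¹ : ℝ) • A.col j)) := by
      ext i k
      have hik := congrFun (congrFun hA i) k
      simp only [Matrix.add_apply, Matrix.transpose_apply, Matrix.zero_apply] at hik
      simp only [Matrix.sum_apply, Matrix.sub_apply, vecMulVec_apply, Finset.sum_sub_distrib,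
        Pi.smul_apply, smul_eq_mul, Matrix.col_apply, Pi.single_apply, mul_ite, ite_mul, mul_one,
        mul_zero, one_mul, zero_mul, Finset.sum_ite_eq, Finset.mem_univ, if_true]
      linarith
    rw [hsum]
    apply Finset.sum_induction _
      (fun B : Mat d => ∃ h : G d, h.1.1 = 0 ∧ h.1.2 = B ∧ (lengths h).Nonempty)
    · rintro _ _ ⟨h, h1, rfl, r, hr⟩ ⟨k, k1, rfl, s, hs⟩
      exact ⟨h * k, by simp [mul_fst, h1, k1], by simp [mul_snd, h1], _, mem_lengths_mul hr hs⟩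
    · exact ⟨1, rfl, rfl, _, zero_mem_lengths_one⟩
    · intro j _
      have hmem : IsG ((0 : Vec d), vecMulVec ((2⁻¹ : ℝ) • A.col j) (Pi.single j 1)
        - vecMulVec (Pi.single j 1) ((2⁻¹ : ℝ) • A.col j)) := by
        simp only [IsG, Matrix.transpose_sub, transpose_vecMulVec, zero_vecMulVec]
        abel
      exact ⟨⟨_, hmem⟩, rfl, rfl, _, mem_lengths_comm _ _ rfl rfl⟩
  set k : G d := (gexp g.1.1)⁻¹ * g with hk
  have hk1 : k.1.1 = 0 := by simp [hk, mul_fst, inv_fst, gexp_fst]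
  obtain ⟨h, h1, h2, r, hr⟩ := key k.1.2 (by
    have := k.2
    rwa [IsG, hk1, zero_vecMulVec] at this)
  have hhk : h = k := ext' (h1.trans hk1.symm) h2
  have : g = gexp g.1.1 * h := by rw [hhk, hk]; group
  rw [this]
  exact ⟨_, mem_lengths_mul (mem_lengths_gexp _) hr⟩

theorem gnorm_mul_le (g h : G d) : gnorm (g * h) ≤ gnorm g + gnorm h := by
  have h1 : gnorm (g * h) - gnorm h ≤ gnorm g := by
    apply le_csInf (lengths_nonempty g)
    intro r hr
    have : gnorm (g * h) - r ≤ gnorm h := by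
      apply le_csInf (lengths_nonempty h)
      intro s hs
      have := gnorm_le_of_mem (mem_lengths_mul hr hs)
      linarith
    linarith
  linarith

theorem gnorm_inv_le (g : G d) : gnorm g⁻¹ ≤ gnorm g :=
  le_csInf (lengths_nonempty g) fun _ hr => gnorm_le_of_mem (mem_lengths_inv hr)

theorem gnorm_one : gnorm (1 : G d) = 0 :=
  le_antisymm (gnorm_le_of_mem zero_mem_lengths_one) (gnorm_nonneg _)

theorem gnorm_dil_le {t : ℝ} (h0 : 0 ≤ t) (h1 : t ≤ 1) (g : G d) : gnorm (dil t g) ≤ gnorm g := by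
  apply le_csInf (lengths_nonempty g)
  intro r hr
  have hr0 := lengths_nonneg hr
  obtain ⟨l, rfl, rfl⟩ := hr
  have hmem : t * (l.map enorm).sum ∈ lengths (dil t (prodL (l.map gexp))) := by
    refine ⟨l.map (t • ·), prodL_dil t l, ?_⟩
    rw [List.map_map, ← List.sum_map_mul_left, List.map_congr_left]
    intro x _
    simp [enorm_smul, abs_of_nonneg h0]
  exact (gnorm_le_of_mem hmem).trans (mul_le_of_le_one_left hr0 h1)

theorem enorm_fst_le (g : G d) : enorm g.1.1 ≤ gnorm g := by
  apply le_csInf (lengths_nonempty g)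
  rintro _ ⟨l, rfl, rfl⟩
  induction l with
  | nil => exact enorm_zero.le
  | cons x l ih =>
    simp only [List.map_cons, List.sum_cons]
    exact (enorm_add_le _ _).trans (add_le_add le_rfl ih)

/-- The commutator of `g` and `h` has norm of order `√(‖g‖ ‖h‖)`: it is `(0, a bᵀ - b aᵀ)` with
`a = g¹`, `b = h¹`, hence also the commutator of `exp (λ a)` and `exp (λ⁻¹ b)` for every `λ ≠ 0`,
and the choice `λ² = |b| / |a|` balances the two lengths. -/
theorem gnorm_commutator_le (g h : G d) :
    gnorm (g * h * g⁻¹ * h⁻¹) ≤ 4 * √(gnorm g * gnorm h) := by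
  set a := g.1.1 with ha
  set b := h.1.1 with hb
  have h1 : (g * h * g⁻¹ * h⁻¹).1.1 = 0 := by
    simp only [mul_fst, inv_fst]
    abel
  have h2 : (g * h * g⁻¹ * h⁻¹).1.2 = vecMulVec a b - vecMulVec b a := by
    simp only [mul_fst, mul_snd, inv_fst, inv_snd, add_vecMulVec,
        neg_vecMulVec, vecMulVec_neg, ← ha, ← hb]
    abel
  have hmono : √(enorm a * enorm b) ≤ √(gnorm g * gnorm h) :=
    Real.sqrt_le_sqrt (mul_le_mul (enorm_fst_le g) (enorm_fst_le h) (enorm_nonneg _)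
      (gnorm_nonneg _))
  have hzero : ∀ {v : Vec d}, enorm v = 0 → v = 0 := by
    intro v hv
    rw [enorm_eq, norm_eq_zero] at hv
    simpa using hv
  by_cases hab : enorm a = 0 ∨ enorm b = 0
  · have hone : g * h * g⁻¹ * h⁻¹ = 1 := by
      apply ext' (h1.trans one_fst.symm)
      rw [h2, one_snd]
      rcases hab with h0 | h0 <;> rw [hzero h0] <;> simp
    rw [hone, gnorm_one]
    positivity
  push Not at hab
  have ha0 : 0 < √(enorm a) := Real.sqrt_pos.2 (lt_of_le_of_ne (enorm_nonneg a) hab.1.symm)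
  have hb0 : 0 < √(enorm b) := Real.sqrt_pos.2 (lt_of_le_of_ne (enorm_nonneg b) hab.2.symm)
  have hm := gnorm_le_of_mem (mem_lengths_comm (g := g * h * g⁻¹ * h⁻¹)
    ((√(enorm b) / √(enorm a)) • a) ((√(enorm a) / √(enorm b)) • b) h1 (by
      rw [h2]
      simp only [smul_vecMulVec, vecMulVec_smul, smul_smul]
      rw [div_mul_div_cancel₀ ha0.ne', div_mul_div_cancel₀ hb0.ne', div_self ha0.ne', div_self hb0.ne',
        one_smul, one_smul]))
  rw [enorm_smul, enorm_smul, abs_of_pos (by positivity), abs_of_pos (by positivity)] at hm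
  have e1 : √(enorm b) / √(enorm a) * enorm a = √(enorm a) * √(enorm b) := by
    have := Real.mul_self_sqrt (enorm_nonneg a)
    rw [div_mul_eq_mul_div, div_eq_iff ha0.ne']
    linear_combination -√(enorm b) * this
  have e2 : √(enorm a) / √(enorm b) * enorm b = √(enorm a) * √(enorm b) := by
    have := Real.mul_self_sqrt (enorm_nonneg b)
    rw [div_mul_eq_mul_div, div_eq_iff hb0.ne']
    linear_combination -√(enorm a) * this
  rw [e1, e2, ← Real.sqrt_mul (enorm_nonneg a)] at hm
  linarith

end G

/-! ### The gauge function -/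

/-- The integrand in the definition of `zeta`. -/
def zetaInt (u : ℝ) : ℝ := √(Real.log (1 + 1 / u ^ 2) / u)

theorem zeta_eq (x : ℝ) : zeta x = (1 / (2 * √2)) * ∫ u in (0:ℝ)..x, zetaInt u := rfl

theorem zetaInt_pos {u : ℝ} (hu : 0 < u) : 0 < zetaInt u :=
  Real.sqrt_pos.2 (div_pos (Real.log_pos (by have : 0 < 1 / u ^ 2 := by positivity
                                             linarith)) hu)

theorem zetaInt_nonneg (u : ℝ) : 0 ≤ zetaInt u := Real.sqrt_nonneg _

theorem zetaInt_anti {u v : ℝ} (hu : 0 < u) (huv : u ≤ v) : zetaInt v ≤ zetaInt u := by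
  have hv := hu.trans_le huv
  apply Real.sqrt_le_sqrt
  have h0 : 0 ≤ Real.log (1 + 1 / u ^ 2) :=
    Real.log_nonneg (by have : 0 < 1 / u ^ 2 := by positivity
                        linarith)
  gcongr

theorem zetaInt_measurable : Measurable zetaInt := by
  unfold zetaInt
  fun_prop

/-- From `log y ≤ 4 y^(1/4)` and `1 + u⁻² ≤ 2 u⁻²` one gets `log (1 + u⁻²) / u ≤ 8 u^(-3/2)`, so
`zetaInt` is dominated by a function integrable at `0`. -/
theorem zetaInt_le {u : ℝ} (hu : 0 < u) (hu1 : u ≤ 1) : zetaInt u ≤ 3 * u ^ (-(3 / 4) : ℝ) := by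
  apply Real.sqrt_le_iff.2
  refine ⟨by positivity, ?_⟩
  have h1 : Real.log (1 + 1 / u ^ 2) ≤ (1 + 1 / u ^ 2) ^ (1 / 4 : ℝ) / (1 / 4) :=
    Real.log_le_rpow_div (by positivity) (by norm_num)
  have h2 : (1 + 1 / u ^ 2) ≤ 2 * u ^ (-2 : ℝ) := by
    rw [Real.rpow_neg hu.le, Real.rpow_two]
    have : 1 ≤ (u ^ 2)⁻¹ := (one_le_inv₀ (by positivity)).2 (by nlinarith)
    rw [one_div]
    linarith
  have h3 : (1 + 1 / u ^ 2) ^ (1 / 4 : ℝ) ≤ 2 * u ^ (-(1 / 2) : ℝ) := by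
    calc (1 + 1 / u ^ 2) ^ (1 / 4 : ℝ) ≤ (2 * u ^ (-2 : ℝ)) ^ (1 / 4 : ℝ) :=
          Real.rpow_le_rpow (by positivity) h2 (by norm_num)
      _ = 2 ^ (1 / 4 : ℝ) * u ^ (-(1 / 2) : ℝ) := by
          rw [Real.mul_rpow (by norm_num) (by positivity), ← Real.rpow_mul hu.le]
          norm_num
      _ ≤ 2 * u ^ (-(1 / 2) : ℝ) := by
          apply mul_le_mul_of_nonneg_right _ (by positivity)
          exact Real.rpow_le_self_of_one_le (by norm_num) (by norm_num)
  have h4 : (3 * u ^ (-(3 / 4) : ℝ)) ^ 2 * u = 9 * u ^ (-(1 / 2) : ℝ) := by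
    rw [mul_pow, ← Real.rpow_natCast (u ^ (-(3 / 4) : ℝ)), ← Real.rpow_mul hu.le, mul_assoc,
      ← Real.rpow_add_one hu.ne']
    norm_num
  have h5 : 0 ≤ u ^ (-(1 / 2) : ℝ) := by positivity
  rw [div_le_iff₀ hu, h4]
  linarith

theorem zetaInt_integrable {a b : ℝ} (ha : 0 ≤ a) (hab : a ≤ b) (hb : b ≤ 1) :
    IntervalIntegrable zetaInt volume a b := by
  have h01 : IntervalIntegrable zetaInt volume 0 1 := by
    have hd : IntervalIntegrable (fun u : ℝ => 3 * u ^ (-(3 / 4) : ℝ)) volume 0 1 :=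
      (intervalIntegral.intervalIntegrable_rpow' (by norm_num)).const_mul 3
    apply hd.mono_fun' zetaInt_measurable.aestronglyMeasurable
    rw [Set.uIoc_of_le zero_le_one]
    refine (ae_restrict_iff' measurableSet_Ioc).2 (Eventually.of_forall fun u hu => ?_)
    beta_reduce
    rw [Real.norm_of_nonneg (zetaInt_nonneg u)]
    exact zetaInt_le hu.1 hu.2
  apply h01.mono_set
  rw [Set.uIcc_of_le hab, Set.uIcc_of_le zero_le_one]
  exact Set.Icc_subset_Icc ha hb

theorem zeta_sub {a b : ℝ} (ha : 0 ≤ a) (hab : a ≤ b) (hb : b ≤ 1) :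
    zeta b - zeta a = (1 / (2 * √2)) * ∫ u in a..b, zetaInt u := by
  rw [zeta_eq, zeta_eq, ← mul_sub, intervalIntegral.integral_interval_sub_left
    (zetaInt_integrable le_rfl (ha.trans hab) hb) (zetaInt_integrable le_rfl ha (hab.trans hb))]

theorem zeta_mono {a b : ℝ} (ha : 0 ≤ a) (hab : a ≤ b) (hb : b ≤ 1) : zeta a ≤ zeta b := by
  have := zeta_sub ha hab hb
  have h0 : 0 ≤ ∫ u in a..b, zetaInt u :=
    intervalIntegral.integral_nonneg hab fun u _ => zetaInt_nonneg u
  have : 0 ≤ zeta b - zeta a := by rw [this]; positivity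
  linarith

theorem zeta_zero : zeta 0 = 0 := by simp [zeta]

theorem zeta_pos {b : ℝ} (hb0 : 0 < b) (hb : b ≤ 1) : 0 < zeta b := by
  rw [zeta_eq]
  have : 0 < ∫ u in (0:ℝ)..b, zetaInt u :=
    intervalIntegral.intervalIntegral_pos_of_pos_on (zetaInt_integrable le_rfl hb0.le hb)
      (fun u hu => zetaInt_pos hu.1) hb0
  positivity

theorem zeta_nonneg {b : ℝ} (hb0 : 0 ≤ b) (hb : b ≤ 1) : 0 ≤ zeta b := by
  have := zeta_mono le_rfl hb0 hb
  rwa [zeta_zero] at this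

/-- Concavity of `zeta` in the form: the graph lies below each tangent line. -/
theorem zeta_le_tangent {u z : ℝ} (hu0 : 0 < u) (hu1 : u ≤ 1) (hz0 : 0 ≤ z) (hz1 : z ≤ 1) :
    zeta z ≤ zeta u + (1 / (2 * √2)) * zetaInt u * (z - u) := by
  have hc : (0:ℝ) ≤ 1 / (2 * √2) := by positivity
  rcases le_total u z with h | h
  · have h1 := zeta_sub hu0.le h hz1
    have h2 : ∫ v in u..z, zetaInt v ≤ ∫ _ in u..z, zetaInt u :=
      intervalIntegral.integral_mono_on h (zetaInt_integrable hu0.le h hz1) (by simp)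
        fun v hv => zetaInt_anti hu0 hv.1
    rw [intervalIntegral.integral_const, smul_eq_mul] at h2
    nlinarith [mul_le_mul_of_nonneg_left h2 hc]
  · have h1 := zeta_sub hz0 h hu1
    have h2 : ∫ _ in z..u, zetaInt u ≤ ∫ v in z..u, zetaInt v :=
      intervalIntegral.integral_mono_on_of_le_Ioo h (by simp) (zetaInt_integrable hz0 h hu1)
        fun v hv => zetaInt_anti (hz0.trans_lt hv.1) hv.2.le
    rw [intervalIntegral.integral_const, smul_eq_mul] at h2
    nlinarith [mul_le_mul_of_nonneg_left h2 hc]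

/-- The pointwise infimum of the convex majorants of `ζ^p` is `ζ^p` itself: if `L` is the tangent
line of the concave function `ζ` at `u`, then `L ^ p` is a convex majorant which touches `ζ^p`
at `u`. -/
theorem phiP_eq {p u : ℝ} (hp : 1 ≤ p) (hu0 : 0 < u) (hu1 : u ≤ 1) : phiP p u = zeta u := by
  have hz := zeta_nonneg hu0.le hu1
  have hconv : convEnv p u = zeta u ^ p := by
    set m := (1 / (2 * √2)) * zetaInt u
    have hL : ∀ z ∈ Set.Icc (0:ℝ) 1, 0 ≤ zeta u + m * (z - u) := fun z hz =>
      (zeta_nonneg hz.1 hz.2).trans (zeta_le_tangent hu0 hu1 hz.1 hz.2)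
    have hmem : zeta u ^ p ∈ { y | ∃ g : ℝ → ℝ, ConvexOn ℝ (Set.Icc (0:ℝ) 1) g ∧
        (∀ z ∈ Set.Icc (0:ℝ) 1, zeta z ^ p ≤ g z) ∧ y = g u } := by
      refine ⟨fun z => (zeta u + m * (z - u)) ^ p, ⟨convex_Icc 0 1, ?_⟩, ?_, by simp⟩
      · intro x hx y hy a b ha hb hab
        have := (convexOn_rpow hp).2 (hL x hx) (hL y hy) ha hb hab
        convert this using 2
        simp only [smul_eq_mul]
        linear_combination (m * u - zeta u) * hab
      · intro z hz
        exact Real.rpow_le_rpow (zeta_nonneg hz.1 hz.2)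
          (zeta_le_tangent hu0 hu1 hz.1 hz.2) (by linarith)
    have hlb : ∀ y ∈ { y | ∃ g : ℝ → ℝ, ConvexOn ℝ (Set.Icc (0:ℝ) 1) g ∧
        (∀ z ∈ Set.Icc (0:ℝ) 1, zeta z ^ p ≤ g z) ∧ y = g u }, zeta u ^ p ≤ y := by
      rintro _ ⟨g, -, hg, rfl⟩
      exact hg u ⟨hu0.le, hu1⟩
    exact le_antisymm (csInf_le ⟨_, hlb⟩ hmem) (le_csInf ⟨_, hmem⟩ hlb)
  rw [phiP, hconv, one_div, Real.rpow_rpow_inv hz (by linarith)]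

/-! ### Increments of the path and of its approximation -/

theorem gnorm_inc_le {d : ℕ} {p : ℝ} (hp : 1 ≤ p) {x : ℝ → G d}
    (hB : BddAbove (normPhiSet (phiP p) x)) {s t : ℝ} (hs : 0 ≤ s) (hst : s ≤ t) (ht : t ≤ 1) :
    gnorm ((x s)⁻¹ * x t) ≤ normPhi (phiP p) x * zeta (t - s) := by
  rcases hst.eq_or_lt with rfl | hlt
  · rw [inv_mul_cancel, gnorm_one, sub_self, zeta_zero, mul_zero]
  · have h := le_csSup hB ⟨s, t, hs, hlt, ht, rfl⟩
    rw [phiP_eq hp (sub_pos.2 hlt) (by linarith),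
      div_le_iff₀ (zeta_pos (sub_pos.2 hlt) (by linarith))] at h
    exact h

/-- On a dyadic interval starting at `a`, both `x_{a,u}` and `Υ_n(x)_{a,u}` have norm at most
`‖x‖_φ φ(2⁻ⁿ)`. -/
theorem exists_upsilon_eq_mul {d : ℕ} {p : ℝ} (hp : 1 ≤ p) {x : ℝ → G d}
    (hB : BddAbove (normPhiSet (phiP p) x)) (hN : 0 < normPhi (phiP p) x) (n : ℕ) {u : ℝ}
    (hu0 : 0 ≤ u) (hu1 : u ≤ 1) :
    ∃ ε : G d, upsilon n x u = x u * ε ∧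
      gnorm ε ≤ 2 * normPhi (phiP p) x * zeta (1 / 2 ^ n) := by
  have h2 : (0:ℝ) < 2 ^ n := by positivity
  have hh1 : (1:ℝ) / 2 ^ n ≤ 1 := (div_le_one h2).2 (one_le_pow₀ (by norm_num))
  have hz := zeta_nonneg (b := 1 / 2 ^ n) (by positivity) hh1
  set k : ℤ := ⌊(2 : ℝ) ^ n * u⌋ with hk
  have hup : upsilon n x u = x ((k : ℝ) / 2 ^ n) * dil ((2 : ℝ) ^ n * u - (k : ℝ))
      ((x ((k : ℝ) / 2 ^ n))⁻¹ * x (((k : ℝ) + 1) / 2 ^ n)) := rfl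
  have hk1 : (k : ℝ) ≤ 2 ^ n * u := Int.floor_le _
  have hk2 : 2 ^ n * u < k + 1 := Int.lt_floor_add_one _
  have hk0 : (0:ℝ) ≤ k := by exact_mod_cast Int.floor_nonneg.2 (by positivity)
  rcases hk1.eq_or_lt with he | hlt
  · -- At a dyadic point, possibly `u = 1` where `(k + 1) / 2 ^ n` leaves the unit interval.
    refine ⟨1, ?_, by rw [gnorm_one]; positivity⟩
    rw [hup, he, sub_self, dil_zero, mul_div_cancel_left₀ _ h2.ne']
  · have hk3 : (k : ℝ) + 1 ≤ 2 ^ n := by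
      have : (k : ℝ) < 2 ^ n := by nlinarith
      have : k < 2 ^ n := by exact_mod_cast this
      exact_mod_cast Int.add_one_le_iff.2 this
    have ha0 : 0 ≤ (k : ℝ) / 2 ^ n := by positivity
    have hau : (k : ℝ) / 2 ^ n ≤ u := by rw [div_le_iff₀ h2]; linarith
    have hub : u ≤ ((k : ℝ) + 1) / 2 ^ n := by rw [le_div_iff₀ h2]; linarith
    have hb1 : ((k : ℝ) + 1) / 2 ^ n ≤ 1 := (div_le_one h2).2 hk3
    have hlen : ((k : ℝ) + 1) / 2 ^ n - k / 2 ^ n = 1 / 2 ^ n := by ring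
    refine ⟨((x (k / 2 ^ n))⁻¹ * x u)⁻¹ * dil ((2 : ℝ) ^ n * u - (k : ℝ))
      ((x ((k : ℝ) / 2 ^ n))⁻¹ * x (((k : ℝ) + 1) / 2 ^ n)), by rw [hup]; group, ?_⟩
    have e1 := gnorm_inc_le hp hB ha0 hau hu1
    have e2 := gnorm_inc_le hp hB ha0 (hau.trans hub) hb1
    rw [hlen] at e2
    have e3 : zeta (u - k / 2 ^ n) ≤ zeta (1 / 2 ^ n) :=
      zeta_mono (by linarith) (by linarith) hh1
    have e4 := mul_le_mul_of_nonneg_left e3 hN.le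
    refine (gnorm_mul_le _ _).trans ?_
    have e5 := gnorm_inv_le ((x (k / 2 ^ n))⁻¹ * x u)
    have e6 := gnorm_dil_le (t := (2 : ℝ) ^ n * u - (k : ℝ)) (by linarith) (by linarith)
      ((x ((k : ℝ) / 2 ^ n))⁻¹ * x (((k : ℝ) + 1) / 2 ^ n))
    linarith

/-- `d_∞(x, Υ_n(x)) ≤ C ‖x‖_{φ_p} √(φ_p(2^{-n}))` for paths with
`0 < ‖x‖_{φ_p} < ∞`. -/
theorem dInf_upsilon_le (d : ℕ) (hd : 2 ≤ d) (p : ℝ) (hp : 2 < p ∧ p < 3) :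
    ∃ C : ℝ, 0 < C ∧ ∀ (n : ℕ) (x : ℝ → G d), IsPath x →
      BddAbove (normPhiSet (phiP p) x) → 0 < normPhi (phiP p) x →
        ∀ r ∈ dInfSet x (upsilon n x),
          r ≤ C * normPhi (phiP p) x * Real.sqrt (phiP p (1 / 2 ^ n)) := by
  have hp1 : 1 ≤ p := by linarith [hp.1]
  have hz1 : 0 < zeta 1 := zeta_pos one_pos le_rfl
  refine ⟨12 * √(zeta 1), by positivity, ?_⟩
  rintro n x - hB hN r ⟨s, t, hs, hst, ht, rfl⟩
  have h2 : (0:ℝ) < 1 / 2 ^ n := by positivity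
  have hh1 : (1:ℝ) / 2 ^ n ≤ 1 := (div_le_one (by positivity)).2 (one_le_pow₀ (by norm_num))
  rw [phiP_eq hp1 h2 hh1]
  obtain ⟨a, ha, hna⟩ := exists_upsilon_eq_mul hp1 hB hN n hs (hst.le.trans ht)
  obtain ⟨b, hb, hnb⟩ := exists_upsilon_eq_mul hp1 hB hN n (hs.trans hst.le) ht
  have hg := gnorm_inc_le hp1 hB hs hst.le ht
  set N := normPhi (phiP p) x
  set z := zeta (1 / 2 ^ n)
  have hz : 0 ≤ z := zeta_nonneg h2.le hh1
  have hzz : z ≤ zeta 1 := zeta_mono h2.le hh1 le_rfl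
  set g := (x s)⁻¹ * x t with hgdef
  have hg' : gnorm g ≤ N * zeta 1 :=
    hg.trans (mul_le_mul_of_nonneg_left (zeta_mono (by linarith) (by linarith) le_rfl) hN.le)
  -- The distance element is `g⁻¹ a⁻¹ g b`: a commutator followed by the two local errors.
  have key : mul (inv (inc x s t)) (inc (upsilon n x) s t)
      = (g⁻¹ * a⁻¹ * (g⁻¹)⁻¹ * (a⁻¹)⁻¹) * (a⁻¹ * b) := by
    change ((x s)⁻¹ * x t)⁻¹ * ((upsilon n x s)⁻¹ * upsilon n x t) = _
    rw [ha, hb, hgdef]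
    group
  rw [key]
  have c1 := gnorm_mul_le (g⁻¹ * a⁻¹ * (g⁻¹)⁻¹ * (a⁻¹)⁻¹) (a⁻¹ * b)
  have c2 := gnorm_mul_le a⁻¹ b
  have c3 := gnorm_inv_le a
  have c4 := gnorm_commutator_le g⁻¹ a⁻¹
  have c5 : √(gnorm g⁻¹ * gnorm a⁻¹) ≤ 2 * N * (√(zeta 1) * √z) := by
    apply Real.sqrt_le_iff.2
    refine ⟨by positivity, ?_⟩
    have e : (2 * N * (√(zeta 1) * √z)) ^ 2 = 4 * N ^ 2 * (zeta 1 * z) := by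
      rw [mul_pow, mul_pow, mul_pow, Real.sq_sqrt hz1.le, Real.sq_sqrt hz]
      ring
    have f : gnorm g⁻¹ * gnorm a⁻¹ ≤ (N * zeta 1) * (2 * N * z) :=
      mul_le_mul ((gnorm_inv_le g).trans hg') (c3.trans hna) (gnorm_nonneg _) (by positivity)
    have : 0 ≤ N ^ 2 * (zeta 1 * z) := by positivity
    rw [e]
    linarith
  have c6 : N * z ≤ N * (√(zeta 1) * √z) := by
    apply mul_le_mul_of_nonneg_left _ hN.le
    calc z = √z * √z := (Real.mul_self_sqrt hz).symm
      _ ≤ √(zeta 1) * √z := by gcongr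
  linarith

end PaperFV
end
end

section
/- There exists a constant C > 0 (depending only on d) such that for every n ∈ ℕ, every x ∈ C₀([0,1], G(ℝ^d)), and all 0 ≤ s < t ≤ 1: ‖ Υ_n(x)_{s,t} ‖ ≤ C · 2^{n/2} · ‖x‖_∞ · √(t − s). -/
/-!
Write `g = (g¹, g²)`. The homogeneous norm is compared with the size of the entries of `g¹`, `g²`:

* every decomposition of `g` into exponentials of total length `r` forces `|g¹ᵢ| ≤ r` and
  `|g²ᵢⱼ| ≤ r²` (`entries_le_of_isDecomp`), hence `|g¹ᵢ| ≤ ‖g‖` and `|g²ᵢⱼ| ≤ ‖g‖²`;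
* conversely `g = exp(g¹) ⊗ (0, A)` with `A` antisymmetric, and `(0, A)` is a product of commutators
  `[exp(a eᵢ), exp(b eⱼ)] = (0, ab (Eᵢⱼ - Eⱼᵢ))` with `|a| = |b|` of order `|Aᵢⱼ|^{1/2}`. So if
  `|g¹ᵢ| ≤ ρ` and `|g²ᵢⱼ| ≤ ρ²`, then `‖g‖ ≤ (d + 4d²) ρ` (`gnorm_le_of_entries`).

For `0 ≤ a ≤ b ≤ 1` the element `(δ_a g)⁻¹ ⊗ δ_b g` has first level `(b - a) g¹` and second level
`(b - a) ((a + b) g² - a g¹ (g¹)ᵀ)`, so the comparison gives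
`‖(δ_a g)⁻¹ ⊗ δ_b g‖ ≤ 2 (d + 4d²) √(b - a) ‖g‖` (`gnorm_dil_inc_le`). This is the claim when `s` and
`t` lie in one dyadic interval. Otherwise the increment of `Υ_n(x)` splits at the grid points into two
such pieces and an increment of `x` between grid points; the latter is either trivial or spans a
time at least `2⁻ⁿ`, and then `1 ≤ 2^{n/2} √(t - s)`.
-/

noncomputable section

open scoped BigOperators
open MeasureTheory Filter Matrix

namespace PaperFV

open G

/-! ### The group `G(ℝ^d)` -/

variable {d : ℕ}

/-- The group structure of `G(ℝ^d)`, with operations definitionally `G.mul`, `G.one`, `G.inv`. -/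
instance instGroupG : Group (G d) where
  mul := G.mul
  one := G.one
  inv := G.inv
  mul_assoc a b c := by
    apply Subtype.ext
    refine Prod.ext ?_ ?_
    · exact add_assoc _ _ _
    · ext i j
      change (a.1.2 i j + a.1.1 i * b.1.1 j + b.1.2 i j) + (a.1.1 i + b.1.1 i) * c.1.1 j + c.1.2 i j
        = a.1.2 i j + a.1.1 i * (b.1.1 j + c.1.1 j) + (b.1.2 i j + b.1.1 i * c.1.1 j + c.1.2 i j)
      ring
  one_mul a := by
    apply Subtype.ext
    refine Prod.ext ?_ ?_
    · exact zero_add _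
    · ext i j
      change (0 : ℝ) + 0 * a.1.1 j + a.1.2 i j = a.1.2 i j
      ring
  mul_one a := by
    apply Subtype.ext
    refine Prod.ext ?_ ?_
    · exact add_zero _
    · ext i j
      change a.1.2 i j + a.1.1 i * 0 + 0 = a.1.2 i j
      ring
  inv_mul_cancel a := by
    apply Subtype.ext
    refine Prod.ext ?_ ?_
    · exact neg_add_cancel _
    · ext i j
      change (a.1.1 i * a.1.1 j - a.1.2 i j) + (-a.1.1 i) * a.1.1 j + a.1.2 i j = 0
      ring

@[simp] lemma mul_fst (g h : G d) (i : Fin d) : (g * h).1.1 i = g.1.1 i + h.1.1 i := rfl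

@[simp] lemma mul_snd (g h : G d) (i j : Fin d) :
    (g * h).1.2 i j = g.1.2 i j + g.1.1 i * h.1.1 j + h.1.2 i j := rfl

@[simp] lemma one_fst (i : Fin d) : (1 : G d).1.1 i = 0 := rfl

@[simp] lemma one_snd (i j : Fin d) : (1 : G d).1.2 i j = 0 := rfl

@[simp] lemma inv_fst (g : G d) (i : Fin d) : (g⁻¹).1.1 i = - g.1.1 i := rfl

@[simp] lemma inv_snd (g : G d) (i j : Fin d) :
    (g⁻¹).1.2 i j = g.1.1 i * g.1.1 j - g.1.2 i j := rfl

@[simp] lemma dil_fst (t : ℝ) (g : G d) (i : Fin d) : (dil t g).1.1 i = t * g.1.1 i := rfl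

@[simp] lemma dil_snd (t : ℝ) (g : G d) (i j : Fin d) :
    (dil t g).1.2 i j = t ^ 2 * g.1.2 i j := rfl

@[simp] lemma gexp_fst (x : Vec d) (i : Fin d) : (gexp x).1.1 i = x i := rfl

@[simp] lemma gexp_snd (x : Vec d) (i j : Fin d) :
    (gexp x).1.2 i j = 2⁻¹ * (x i * x j) := rfl

lemma g_ext {g h : G d} (h1 : ∀ i, g.1.1 i = h.1.1 i) (h2 : ∀ i j, g.1.2 i j = h.1.2 i j) :
    g = h :=
  Subtype.ext (Prod.ext (funext h1) (Matrix.ext h2))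

lemma dil_one (g : G d) : dil 1 g = g := g_ext (by simp) (by simp)

lemma dil_zero (g : G d) : dil 0 g = 1 := g_ext (by simp) (by simp)

lemma symm_snd (g : G d) (i j : Fin d) : g.1.2 i j + g.1.2 j i = g.1.1 i * g.1.1 j :=
  congrFun (congrFun g.2 i) j

/-! ### Decompositions into exponentials -/

/-- `g` is a product of exponentials of vectors whose Euclidean lengths add up to `r`. -/
def IsDecomp (g : G d) (r : ℝ) : Prop :=
  ∃ l : List (Vec d), prodL (l.map gexp) = g ∧ r = (l.map enorm).sum

lemma enorm_nonneg (x : Vec d) : 0 ≤ enorm x := Real.sqrt_nonneg _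

lemma abs_le_enorm (x : Vec d) (i : Fin d) : |x i| ≤ enorm x := by
  rw [← Real.sqrt_sq_eq_abs]
  exact Real.sqrt_le_sqrt
    (Finset.single_le_sum (f := fun i => x i ^ 2) (fun i _ => sq_nonneg _) (Finset.mem_univ i))

lemma enorm_le_sum (x : Vec d) : enorm x ≤ ∑ i, |x i| := by
  apply Real.sqrt_le_iff.2
  refine ⟨Finset.sum_nonneg fun i _ => abs_nonneg _, ?_⟩
  have h := Finset.sum_sq_le_sq_sum_of_nonneg (s := Finset.univ) (f := fun i => |x i|)
    (fun i _ => abs_nonneg _)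
  simpa only [sq_abs] using h

lemma enorm_single (i : Fin d) (a : ℝ) : enorm (Pi.single i a : Vec d) = |a| := by
  apply le_antisymm
  · refine (enorm_le_sum _).trans (le_of_eq ?_)
    rw [Finset.sum_eq_single i]
    · simp
    · intro j _ hj
      simp [hj]
    · simp
  · simpa using abs_le_enorm (Pi.single i a : Vec d) i

lemma prodL_append (l m : List (G d)) : prodL (l ++ m) = prodL l * prodL m := by
  induction l with
  | nil => exact (one_mul _).symm
  | cons g l ih =>
    change g * prodL (l ++ m) = g * prodL l * prodL m
    rw [ih, mul_assoc]

lemma IsDecomp.mul {g h : G d} {r s : ℝ} (hg : IsDecomp g r) (hh : IsDecomp h s) :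
    IsDecomp (g * h) (r + s) := by
  obtain ⟨l, rfl, rfl⟩ := hg
  obtain ⟨m, rfl, rfl⟩ := hh
  exact ⟨l ++ m, by rw [List.map_append, prodL_append], by simp⟩

lemma isDecomp_one : IsDecomp (1 : G d) 0 := ⟨[], rfl, by simp⟩

lemma isDecomp_gexp (x : Vec d) : IsDecomp (gexp x) (enorm x) :=
  ⟨[x], mul_one (gexp x), by simp⟩

lemma IsDecomp.nonneg {g : G d} {r : ℝ} (h : IsDecomp g r) : 0 ≤ r := by
  obtain ⟨l, -, rfl⟩ := h
  apply List.sum_nonneg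
  intro a ha
  obtain ⟨x, -, rfl⟩ := List.mem_map.1 ha
  exact enorm_nonneg x

lemma gnorm_nonneg (g : G d) : 0 ≤ gnorm g :=
  Real.sInf_nonneg fun _ h => IsDecomp.nonneg h

lemma IsDecomp.gnorm_le {g : G d} {r : ℝ} (h : IsDecomp g r) : gnorm g ≤ r :=
  csInf_le ⟨0, fun _ h => IsDecomp.nonneg h⟩ h

lemma entries_le_of_isDecomp {g : G d} {r : ℝ} (h : IsDecomp g r) :
    (∀ i, |g.1.1 i| ≤ r) ∧ ∀ i j, |g.1.2 i j| ≤ r ^ 2 := by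
  obtain ⟨l, rfl, rfl⟩ := h
  induction l with
  | nil =>
    change (∀ i, |(1 : G d).1.1 i| ≤ _) ∧ ∀ i j, |(1 : G d).1.2 i j| ≤ _
    simp
  | cons x l ih =>
    obtain ⟨ih1, ih2⟩ := ih
    have hx := abs_le_enorm x
    have hx0 := enorm_nonneg x
    have hs : 0 ≤ (l.map enorm).sum :=
      IsDecomp.nonneg (g := prodL (l.map gexp)) ⟨l, rfl, rfl⟩
    rw [List.map_cons, List.map_cons, List.sum_cons]
    change (∀ i, |(gexp x * prodL (l.map gexp)).1.1 i| ≤ _) ∧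
      ∀ i j, |(gexp x * prodL (l.map gexp)).1.2 i j| ≤ _
    set p := prodL (l.map gexp)
    set L := (l.map enorm).sum
    refine ⟨fun i => ?_, fun i j => ?_⟩
    · rw [mul_fst, gexp_fst]
      exact (abs_add_le _ _).trans (add_le_add (hx i) (ih1 i))
    · rw [mul_snd, gexp_snd, gexp_fst]
      have h1 : |x i * x j| ≤ enorm x * enorm x := by
        rw [abs_mul]
        exact mul_le_mul (hx i) (hx j) (abs_nonneg _) hx0
      have h2 : |x i * p.1.1 j| ≤ enorm x * L := by
        rw [abs_mul]
        exact mul_le_mul (hx i) (ih1 j) (abs_nonneg _) hx0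
      have h3 := ih2 i j
      rw [abs_le] at h1 h2 h3 ⊢
      constructor <;> nlinarith [mul_nonneg hx0 hs, mul_nonneg hx0 hx0]

/-! ### Comparison of the norm with the entries -/

/-- A central element `(0, c (Eᵢⱼ - Eⱼᵢ))` is the commutator of `exp(√|c| eᵢ)` and
`exp(±√|c| eⱼ)`, hence a product of exponentials of total length `4 √|c|`. -/
lemma isDecomp_commutator (i j : Fin d) (c : ℝ) (g : G d) (h1 : ∀ k, g.1.1 k = 0)
    (h2 : g.1.2 = c • (Matrix.single i j 1 - Matrix.single j i 1)) :
    IsDecomp g (4 * √|c|) := by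
  obtain ⟨b, hb, hab⟩ : ∃ b : ℝ, |b| = √|c| ∧ √|c| * b = c := by
    rcases le_total 0 c with hc | hc
    · exact ⟨√|c|, abs_of_nonneg (Real.sqrt_nonneg _), by
        rw [Real.mul_self_sqrt (abs_nonneg _), abs_of_nonneg hc]⟩
    · exact ⟨-√|c|, by rw [abs_neg, abs_of_nonneg (Real.sqrt_nonneg _)], by
        rw [mul_neg, Real.mul_self_sqrt (abs_nonneg _), abs_of_nonpos hc, neg_neg]⟩
  set a := √|c| with ha
  have ha0 : |a| = a := abs_of_nonneg (Real.sqrt_nonneg _)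
  have key := (((isDecomp_gexp (Pi.single i a)).mul (isDecomp_gexp (Pi.single j b))).mul
    (isDecomp_gexp (Pi.single i (-a)))).mul (isDecomp_gexp (Pi.single j (-b)))
  simp only [enorm_single, abs_neg, hb, ha0] at key
  have hs1 : ∀ (p : Fin d) (t : ℝ) (k : Fin d),
      (Pi.single p t : Vec d) k = t * if k = p then 1 else 0 := by
    intro p t k
    simp [Pi.single_apply]
  have hs2 : ∀ p q k l : Fin d, Matrix.single p q (1 : ℝ) k l =
      (if k = p then 1 else 0) * if l = q then 1 else 0 := by
    intro p q k l
    simp only [Matrix.single_apply, ite_and, eq_comm, mul_ite, mul_one, mul_zero]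
    split_ifs <;> rfl
  convert key using 1
  · apply g_ext
    · intro k
      rw [h1]
      simp only [mul_fst, gexp_fst, hs1]
      ring
    · intro k l
      rw [h2, ← hab]
      simp only [mul_snd, mul_fst, gexp_fst, gexp_snd, Matrix.smul_apply, Matrix.sub_apply,
        smul_eq_mul, hs1, hs2]
      ring
  · ring

lemma isDecomp_central (c : Fin d × Fin d → ℝ) (S : Finset (Fin d × Fin d)) :
    ∀ g : G d, (∀ k, g.1.1 k = 0) →
      g.1.2 = ∑ p ∈ S, c p • (Matrix.single p.1 p.2 1 - Matrix.single p.2 p.1 1) →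
      IsDecomp g (∑ p ∈ S, 4 * √|c p|) := by
  classical
  induction S using Finset.induction_on with
  | empty =>
    intro g h1 h2
    have : g = 1 := g_ext (by simpa using h1) (by simp [h2])
    rw [this, Finset.sum_empty]
    exact isDecomp_one
  | insert p S hp ih =>
    intro g h1 h2
    rw [Finset.sum_insert hp] at h2 ⊢
    let z : G d := ⟨(0, c p • (Matrix.single p.1 p.2 1 - Matrix.single p.2 p.1 1)), by
      simp [IsG, Matrix.transpose_smul, Matrix.transpose_sub, ← smul_add]⟩
    have hz : IsDecomp z (4 * √|c p|) :=
      isDecomp_commutator p.1 p.2 (c p) z (fun _ => rfl) rfl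
    have hw : IsDecomp (z⁻¹ * g) (∑ p ∈ S, 4 * √|c p|) := by
      apply ih
      · intro k
        rw [mul_fst, inv_fst, h1]
        simp [z]
      · ext k l
        rw [mul_snd, inv_fst, inv_snd, h1, h2, Matrix.add_apply]
        simp [z]
    have := hz.mul hw
    rwa [mul_inv_cancel_left] at this

/-- Factorization `g = exp(g¹) ⊗ (0, A)`, with the antisymmetric matrix `A = g² - ½ g¹ (g¹)ᵀ` written
as `∑ᵢⱼ ½ Aᵢⱼ (Eᵢⱼ - Eⱼᵢ)`. -/
lemma isDecomp_full (g : G d) :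
    IsDecomp g (enorm g.1.1 +
      ∑ p : Fin d × Fin d, 4 * √|(g.1.2 p.1 p.2 - 2⁻¹ * (g.1.1 p.1 * g.1.1 p.2)) / 2|) := by
  have hw := isDecomp_central
    (fun p => (g.1.2 p.1 p.2 - 2⁻¹ * (g.1.1 p.1 * g.1.1 p.2)) / 2) Finset.univ
    ((gexp g.1.1)⁻¹ * g) (fun k => by simp) (by
      ext k l
      rw [mul_snd, inv_fst, inv_snd, Matrix.sum_apply]
      simp only [Fintype.sum_prod_type, Matrix.smul_apply, Matrix.sub_apply, Matrix.single_apply,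
        smul_eq_mul, mul_sub, Finset.sum_sub_distrib, gexp_fst, gexp_snd, mul_ite, mul_one,
        mul_zero, ite_and]
      have h := symm_snd g k l
      simp
      linarith)
  have := (isDecomp_gexp g.1.1).mul hw
  rwa [mul_inv_cancel_left] at this

lemma decomp_nonempty (g : G d) : {r | IsDecomp g r}.Nonempty := ⟨_, isDecomp_full g⟩

lemma abs_fst_le_gnorm (g : G d) (i : Fin d) : |g.1.1 i| ≤ gnorm g :=
  le_csInf (decomp_nonempty g) fun _ h => (entries_le_of_isDecomp h).1 i

lemma abs_snd_le_gnorm_sq (g : G d) (i j : Fin d) : |g.1.2 i j| ≤ gnorm g ^ 2 := by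
  rw [← Real.sqrt_le_left (gnorm_nonneg g)]
  exact le_csInf (decomp_nonempty g) fun _ h =>
    (Real.sqrt_le_left (IsDecomp.nonneg h)).2 ((entries_le_of_isDecomp h).2 i j)

lemma gnorm_mul_le (g h : G d) : gnorm (g * h) ≤ gnorm g + gnorm h := by
  rw [← sub_le_iff_le_add]
  refine le_csInf (decomp_nonempty g) fun r hr => ?_
  rw [sub_le_comm]
  refine le_csInf (decomp_nonempty h) fun s hs => ?_
  rw [sub_le_iff_le_add']
  exact (IsDecomp.mul hr hs).gnorm_le

lemma gnorm_one_le : gnorm (1 : G d) ≤ 0 := isDecomp_one.gnorm_le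

lemma gnorm_le_of_entries (g : G d) {ρ : ℝ} (hρ : 0 ≤ ρ) (h1 : ∀ i, |g.1.1 i| ≤ ρ)
    (h2 : ∀ i j, |g.1.2 i j| ≤ ρ ^ 2) : gnorm g ≤ (d + 4 * d ^ 2) * ρ := by
  refine (isDecomp_full g).gnorm_le.trans ?_
  have hA : enorm g.1.1 ≤ d * ρ := by
    refine (enorm_le_sum _).trans ((Finset.sum_le_sum fun i _ => h1 i).trans ?_)
    simp
  have hB : ∑ p : Fin d × Fin d, 4 * √|(g.1.2 p.1 p.2 - 2⁻¹ * (g.1.1 p.1 * g.1.1 p.2)) / 2|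
      ≤ ∑ _p : Fin d × Fin d, 4 * ρ := by
    refine Finset.sum_le_sum fun p _ => ?_
    have h3 : |g.1.1 p.1 * g.1.1 p.2| ≤ ρ * ρ := by
      rw [abs_mul]
      exact mul_le_mul (h1 _) (h1 _) (abs_nonneg _) hρ
    have h4 := h2 p.1 p.2
    have h5 : √|(g.1.2 p.1 p.2 - 2⁻¹ * (g.1.1 p.1 * g.1.1 p.2)) / 2| ≤ ρ := by
      rw [Real.sqrt_le_left hρ]
      rw [abs_le] at h3 h4 ⊢
      constructor <;> nlinarith
    linarith
  have hC : ∑ _p : Fin d × Fin d, 4 * ρ = 4 * (d : ℝ) ^ 2 * ρ := by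
    simp
    ring
  rw [hC] at hB
  linarith

/-! ### Increments of the interpolation -/

/-- The path `t ↦ δ_t g` is `½`-Hölder on `[0,1]` with constant of order `‖g‖`: both levels of the
increment carry a factor `b - a`, and the second level enters the norm through a square root. -/
lemma gnorm_dil_inc_le (g : G d) {a b : ℝ} (ha : 0 ≤ a) (hab : a ≤ b) (hb : b ≤ 1) :
    gnorm ((dil a g)⁻¹ * dil b g) ≤ 2 * (d + 4 * d ^ 2) * √(b - a) * gnorm g := by
  have hN := gnorm_nonneg g
  set N := gnorm g with hNdef
  have hab0 : 0 ≤ b - a := sub_nonneg.2 hab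
  have hs0 := Real.sqrt_nonneg (b - a)
  have hsq := Real.sq_sqrt hab0
  have hle : b - a ≤ √(b - a) := by
    have : √(b - a) ≤ 1 := Real.sqrt_le_one.2 (by linarith)
    nlinarith
  have key := gnorm_le_of_entries ((dil a g)⁻¹ * dil b g) (ρ := 2 * √(b - a) * N)
    (by positivity) ?_ ?_
  · linarith
  · intro i
    have h1 : |g.1.1 i| ≤ N := abs_fst_le_gnorm g i
    have h2 : ((dil a g)⁻¹ * dil b g).1.1 i = (b - a) * g.1.1 i := by
      simp
      ring
    rw [h2, abs_mul, abs_of_nonneg hab0]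
    calc (b - a) * |g.1.1 i| ≤ √(b - a) * N := mul_le_mul hle h1 (abs_nonneg _) hs0
      _ ≤ 2 * √(b - a) * N := by nlinarith [mul_nonneg hs0 hN]
  · intro i j
    have h1 : |g.1.2 i j| ≤ N ^ 2 := abs_snd_le_gnorm_sq g i j
    have h2 : |g.1.1 i * g.1.1 j| ≤ N ^ 2 := by
      rw [abs_mul, sq]
      exact mul_le_mul (abs_fst_le_gnorm g i) (abs_fst_le_gnorm g j) (abs_nonneg _) hN
    have h3 : ((dil a g)⁻¹ * dil b g).1.2 i j
        = (b - a) * ((a + b) * g.1.2 i j - a * (g.1.1 i * g.1.1 j)) := by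
      simp
      ring
    have h4 : |(a + b) * g.1.2 i j - a * (g.1.1 i * g.1.1 j)| ≤ 4 * N ^ 2 := by
      refine (abs_sub _ _).trans ?_
      rw [abs_mul, abs_mul a, abs_of_nonneg (add_nonneg ha (ha.trans hab)), abs_of_nonneg ha]
      have h5 : (a + b) * |g.1.2 i j| ≤ 2 * N ^ 2 :=
        mul_le_mul (by linarith) h1 (abs_nonneg _) (by norm_num)
      have h6 : a * |g.1.1 i * g.1.1 j| ≤ 1 * N ^ 2 :=
        mul_le_mul (by linarith) h2 (abs_nonneg _) (by norm_num)
      nlinarith [sq_nonneg N]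
    rw [h3, abs_mul, abs_of_nonneg hab0, mul_pow, mul_pow, hsq]
    nlinarith [mul_le_mul_of_nonneg_left h4 hab0]

/-- The supremum defining `‖x‖_∞` is a genuine one: the coordinates of a continuous path are bounded
on `[0,1]`, hence so are the norms of its increments. -/
lemma gnorm_inc_le_normInf {x : ℝ → G d} (hx : IsPath x) {s t : ℝ} (hs : 0 ≤ s) (hst : s < t)
    (ht : t ≤ 1) : gnorm (inc x s t) ≤ normInf x := by
  have hb1 : ∀ i, ∃ M, ∀ u ∈ Set.Icc (0 : ℝ) 1, |(x u).1.1 i| ≤ M := fun i =>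
    isCompact_Icc.exists_bound_of_continuousOn
      (f := fun u => (x u).1.1 i) ((continuous_apply i).comp_continuousOn hx.1.fst)
  have hb2 : ∀ i j, ∃ M, ∀ u ∈ Set.Icc (0 : ℝ) 1, |(x u).1.2 i j| ≤ M := fun i j =>
    isCompact_Icc.exists_bound_of_continuousOn
      (f := fun u => (x u).1.2 i j)
      ((continuous_apply j).comp_continuousOn ((continuous_apply i).comp_continuousOn hx.1.snd))
  choose M1 hM1 using hb1
  choose M2 hM2 using hb2
  obtain ⟨M, hM0, hMa, hMb⟩ : ∃ M : ℝ, 0 ≤ M ∧ (∀ i, M1 i ≤ M) ∧ ∀ i j, M2 i j ≤ M := by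
    refine ⟨∑ i, |M1 i| + ∑ i, ∑ j, |M2 i j|, by positivity, fun i => ?_, fun i j => ?_⟩
    · have h1 := Finset.single_le_sum (f := fun i => |M1 i|) (fun i _ => abs_nonneg _)
        (Finset.mem_univ i)
      have h2 : 0 ≤ ∑ i, ∑ j, |M2 i j| := by positivity
      have h3 := le_abs_self (M1 i)
      linarith
    · have h1 := Finset.single_le_sum (f := fun i => ∑ j, |M2 i j|)
        (fun i _ => Finset.sum_nonneg fun j _ => abs_nonneg _) (Finset.mem_univ i)
      have h2 := Finset.single_le_sum (f := fun j => |M2 i j|) (fun j _ => abs_nonneg _)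
        (Finset.mem_univ j)
      have h3 : 0 ≤ ∑ i, |M1 i| := by positivity
      have h4 := le_abs_self (M2 i j)
      linarith
  refine le_csSup ⟨(d + 4 * d ^ 2) * (2 * M + 1), ?_⟩ ⟨s, t, hs, hst, ht, rfl⟩
  rintro _ ⟨u, v, hu, huv, hv, rfl⟩
  have hu' : u ∈ Set.Icc (0 : ℝ) 1 := ⟨hu, by linarith⟩
  have hv' : v ∈ Set.Icc (0 : ℝ) 1 := ⟨by linarith, hv⟩
  have h1 : ∀ w ∈ Set.Icc (0 : ℝ) 1, ∀ i, |(x w).1.1 i| ≤ M := fun w hw i =>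
    (hM1 i w hw).trans (hMa i)
  have h2 : ∀ w ∈ Set.Icc (0 : ℝ) 1, ∀ i j, |(x w).1.2 i j| ≤ M := fun w hw i j =>
    (hM2 i j w hw).trans (hMb i j)
  apply gnorm_le_of_entries _ (by positivity)
  · intro i
    change |-(x u).1.1 i + (x v).1.1 i| ≤ _
    have e1 := abs_le.1 (h1 u hu' i)
    have e2 := abs_le.1 (h1 v hv' i)
    rw [abs_le]
    constructor <;> linarith
  · intro i j
    change |((x u).1.1 i * (x u).1.1 j - (x u).1.2 i j) + -(x u).1.1 i * (x v).1.1 j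
      + (x v).1.2 i j| ≤ _
    have e1 := abs_le.1 (h2 u hu' i j)
    have e2 := abs_le.1 (h2 v hv' i j)
    have e3 : |(x u).1.1 i * (x u).1.1 j| ≤ M * M := by
      rw [abs_mul]
      exact mul_le_mul (h1 u hu' i) (h1 u hu' j) (abs_nonneg _) hM0
    have e4 : |(x u).1.1 i * (x v).1.1 j| ≤ M * M := by
      rw [abs_mul]
      exact mul_le_mul (h1 u hu' i) (h1 v hv' j) (abs_nonneg _) hM0
    rw [abs_le] at e3 e4 ⊢
    constructor <;> nlinarith [mul_nonneg hM0 hM0]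

/-- `‖Υ_n(x)_{s,t}‖ ≤ C 2^{n/2} ‖x‖_∞ √(t−s)`. -/
theorem upsilon_increment_le (d : ℕ) (hd : 2 ≤ d) :
    ∃ C : ℝ, 0 < C ∧ ∀ (n : ℕ) (x : ℝ → G d), IsPath x →
      ∀ s t : ℝ, 0 ≤ s → s < t → t ≤ 1 →
        gnorm (inc (upsilon n x) s t) ≤
          C * 2 ^ ((n : ℝ) / 2) * normInf x * Real.sqrt (t - s) := by
  -- the two pieces at the ends contribute `2 (d + 4d²)` each, the middle one contributes `1`
  refine ⟨2 * (2 * (d + 4 * d ^ 2)) + 1, by positivity, ?_⟩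
  intro n x hx s t hs hst ht
  have hpow : (0 : ℝ) < 2 ^ n := by positivity
  set N := normInf x with hN
  have hN0 : 0 ≤ N :=
    (gnorm_nonneg _).trans (gnorm_inc_le_normInf hx hs hst ht)
  set K : ℝ := 2 * (d + 4 * d ^ 2) with hK
  have hK0 : 0 ≤ K := by positivity
  set q : ℝ := √(2 ^ n * (t - s)) with hq
  have hq0 : 0 ≤ q := Real.sqrt_nonneg _
  have hqeq : (2 : ℝ) ^ ((n : ℝ) / 2) * √(t - s) = q := by
    rw [hq, Real.sqrt_mul hpow.le, Real.sqrt_eq_rpow (2 ^ n : ℝ), ← Real.rpow_natCast,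
      ← Real.rpow_mul (by norm_num)]
    congr 2
    ring
  suffices h : gnorm (inc (upsilon n x) s t) ≤ (2 * K + 1) * N * q by
    rw [← hqeq] at h
    linarith
  have hst2 : (2 : ℝ) ^ n * s < 2 ^ n * t := by nlinarith
  have ht2 : (2 : ℝ) ^ n * t ≤ 2 ^ n := by nlinarith
  have hs2 : (0 : ℝ) ≤ 2 ^ n * s := by positivity
  obtain ⟨k, hk⟩ : ∃ k : ℤ, ⌊(2 : ℝ) ^ n * s⌋ = k := ⟨_, rfl⟩
  obtain ⟨l, hl⟩ : ∃ l : ℤ, ⌊(2 : ℝ) ^ n * t⌋ = l := ⟨_, rfl⟩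
  set a : ℝ := 2 ^ n * s - k with ha
  set b : ℝ := 2 ^ n * t - l with hb
  -- `g m` is the increment of `x` over the `m`-th dyadic interval
  set g : ℤ → G d := fun m => inc x ((m : ℝ) / 2 ^ n) (((m : ℝ) + 1) / 2 ^ n) with hg
  obtain ⟨hk1, hk2⟩ := Int.floor_eq_iff.1 hk
  obtain ⟨hl1, hl2⟩ := Int.floor_eq_iff.1 hl
  have hk0 : (0 : ℝ) ≤ k := by
    have : (0 : ℤ) ≤ k := by
      rw [← hk]
      exact Int.floor_nonneg.2 hs2
    exact_mod_cast this
  have hkl : k ≤ l := by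
    rw [← hk, ← hl]
    exact Int.floor_mono hst2.le
  have hlpow : (l : ℝ) ≤ 2 ^ n := hl1.trans ht2
  have ha0 : 0 ≤ a := by linarith
  have ha1 : a ≤ 1 := by linarith
  have hb0 : 0 ≤ b := by linarith
  have hb1 : b ≤ 1 := by linarith
  have hgm : ∀ m : ℤ, (0 : ℝ) ≤ m → (m : ℝ) + 1 ≤ 2 ^ n → gnorm (g m) ≤ N := by
    intro m hm0 hm1
    exact gnorm_inc_le_normInf hx (by positivity) (div_lt_div_of_pos_right (by linarith) hpow)
      ((div_le_one hpow).2 hm1)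
  have hpiece : ∀ (m : ℤ) (a' b' : ℝ), 0 ≤ a' → a' ≤ b' → b' ≤ 1 → (0 : ℝ) ≤ m →
      (m : ℝ) + 1 ≤ 2 ^ n → b' - a' ≤ 2 ^ n * (t - s) →
      gnorm ((dil a' (g m))⁻¹ * dil b' (g m)) ≤ K * q * N := by
    intro m a' b' h0 h1 h2 hm0 hm1 h3
    refine (gnorm_dil_inc_le (g m) h0 h1 h2).trans ?_
    rw [← hK]
    exact mul_le_mul (mul_le_mul_of_nonneg_left (Real.sqrt_le_sqrt h3) hK0) (hgm m hm0 hm1)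
      (gnorm_nonneg _) (by positivity)
  have hKqN : 0 ≤ K * q * N := by positivity
  have hqN : 0 ≤ q * N := by positivity
  have hinc : inc (upsilon n x) s t =
      (x ((k : ℝ) / 2 ^ n) * dil a (g k))⁻¹ * (x ((l : ℝ) / 2 ^ n) * dil b (g l)) := by
    simp only [inc, upsilon, hk, hl]
    rfl
  rw [hinc]
  rcases hkl.eq_or_lt with rfl | hlt
  · have hsplit : (x ((k : ℝ) / 2 ^ n) * dil a (g k))⁻¹ * (x ((k : ℝ) / 2 ^ n) * dil b (g k))
        = (dil a (g k))⁻¹ * dil b (g k) := by group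
    rw [hsplit]
    rcases lt_or_ge (k : ℝ) (2 ^ n) with hk3 | hk3
    · have hk4 : (k : ℝ) + 1 ≤ 2 ^ n := by exact_mod_cast hk3
      have := hpiece k a b ha0 (by linarith) hb1 hk0 hk4 (by linarith)
      nlinarith
    · exfalso
      linarith
  · have hlt' : (k : ℝ) + 1 ≤ l := by exact_mod_cast hlt
    have hsplit : (x ((k : ℝ) / 2 ^ n) * dil a (g k))⁻¹ * (x ((l : ℝ) / 2 ^ n) * dil b (g l))
        = (dil a (g k))⁻¹ * dil 1 (g k) * ((x (((k : ℝ) + 1) / 2 ^ n))⁻¹ * x ((l : ℝ) / 2 ^ n))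
          * ((dil 0 (g l))⁻¹ * dil b (g l)) := by
      have hgk : g k = (x ((k : ℝ) / 2 ^ n))⁻¹ * x (((k : ℝ) + 1) / 2 ^ n) := rfl
      rw [dil_one, dil_zero]
      generalize dil a (g k) = u
      rw [hgk]
      group
    have h1 := hpiece k a 1 ha0 ha1 le_rfl hk0 (by linarith) (by linarith)
    have h2 : gnorm ((x (((k : ℝ) + 1) / 2 ^ n))⁻¹ * x ((l : ℝ) / 2 ^ n)) ≤ q * N := by
      rcases hlt'.eq_or_lt with h | h
      · rw [h, inv_mul_cancel]
        exact gnorm_one_le.trans hqN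
      · have hq1 : 1 ≤ q := by
          have h' : (k : ℝ) + 2 ≤ l := by
            have : k + 1 < l := by exact_mod_cast h
            have : k + 2 ≤ l := by omega
            exact_mod_cast this
          exact Real.one_le_sqrt.2 (by linarith)
        have := gnorm_inc_le_normInf hx (s := ((k : ℝ) + 1) / 2 ^ n) (t := (l : ℝ) / 2 ^ n)
          (by positivity) (div_lt_div_of_pos_right h hpow) ((div_le_one hpow).2 hlpow)
        exact le_trans this (by nlinarith)
    have h3 : gnorm ((dil 0 (g l))⁻¹ * dil b (g l)) ≤ K * q * N := by
      rcases lt_or_ge (l : ℝ) (2 ^ n) with hl3 | hl3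
      · have hl4 : (l : ℝ) + 1 ≤ 2 ^ n := by exact_mod_cast hl3
        exact hpiece l 0 b le_rfl hb0 hb1 (by linarith) hl4 (by linarith)
      · -- here `t = 1`, and `g l` involves values of `x` outside `[0,1]`; it is dilated by `0`
        have hb00 : b = 0 := by linarith
        rw [hb00, inv_mul_cancel]
        exact gnorm_one_le.trans hKqN
    rw [hsplit]
    have h4 := gnorm_mul_le ((dil a (g k))⁻¹ * dil 1 (g k) *
      ((x (((k : ℝ) + 1) / 2 ^ n))⁻¹ * x ((l : ℝ) / 2 ^ n))) ((dil 0 (g l))⁻¹ * dil b (g l))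
    have h5 := gnorm_mul_le ((dil a (g k))⁻¹ * dil 1 (g k))
      ((x (((k : ℝ) + 1) / 2 ^ n))⁻¹ * x ((l : ℝ) / 2 ^ n))
    linarith

end PaperFV
end
end
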